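/- (Relation between antisymmetric- and symmetric-colored quiver forms under q ↦ q⁻¹.) Let m ∈ ℕ, S, A ∈ ℤ^m, let Q ∈ M_m(ℤ) be symmetric, and let σ : ℚ(q,a) → ℚ(q,a) be the unique field automorphism fixing ℚ and a with σ(q) = q⁻¹. Define the symmetric matrix Q′ by Q′_{ii} = −Q_{ii} and Q′_{ij} = −Q_{ij} − 1 for i ≠ j (i.e. Q′ = −Q − J + I, where J is the all-ones matrix). Then for every j ∈ ℕ: σ( Σ_{d∈ℕ^m, d₁+⋯+d_m=j} (−q)^{S·d} a^{A·d} q^{d·Q·dᵀ} [j; d₁,…,d_m] ) = Σ_{d∈ℕ^m, d₁+⋯+d_m=j} (−q)^{−S·d} a^{A·d} q^{d·Q′·dᵀ} [j; d₁,…,d_m]. -/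

import Mathlib

/-!
The identity holds term by term in `d`.  Each factor of `(q²;q²)_N` satisfies
`1 - q^{-2i} = -q^{-2i} (1 - q^{2i})`, so `σ` multiplies `(q²;q²)_N` by `(-1)^N q^{-N(N+1)}`
(`map_qq2`).  Since `Σ dᵢ = j`, it follows that `σ` multiplies the quantum multinomial by
`q^{Σ dᵢ² - j²}` (`map_multinomial`), which is exactly the contribution of `I - J` to the
quadratic form of `Q′ = -Q - J + I`.
-/

/-!
STATEMENT 5: Relation between antisymmetric- and symmetric-colored quiver forms
under the automorphism `q ↦ q⁻¹` of `ℚ(q,a)`.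

Setup: `F = ℚ(q,a)` with `qv = q`, `av = a`; `qq2 N = (q²;q²)_N`.
The quantum multinomial `[j; d₁,…,d_m]` is `qq2 j / ∏ qq2 dᵢ`.
`σ` is a field automorphism of `F` with `σ q = q⁻¹` and `σ a = a` (such a ring
automorphism automatically fixes `ℚ`).  The matrix `Q′ = −Q − J + I` has entries
`Q′_{ii} = −Q_{ii}` and `Q′_{ij} = −Q_{ij} − 1` for `i ≠ j`.
`tuples (Fin m) j` is the finset of `d ∈ ℕ^m` with `d₁+⋯+d_m = j`.
-/

open Finset

noncomputable section

/-- The field `ℚ(q,a)` of rational functions in two indeterminates over `ℚ`. -/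
abbrev F : Type := FractionRing (MvPolynomial (Fin 2) ℚ)

/-- The indeterminate `q`. -/
def qv : F := algebraMap (MvPolynomial (Fin 2) ℚ) F (MvPolynomial.X 0)

/-- The indeterminate `a`. -/
def av : F := algebraMap (MvPolynomial (Fin 2) ℚ) F (MvPolynomial.X 1)

/-- The Pochhammer symbol `(c;q²)_N = ∏_{i=0}^{N-1} (1 - c q^{2i})`. -/
def poch (c : F) (N : ℕ) : F := ∏ i ∈ Finset.range N, (1 - c * qv ^ (2 * i))

/-- `(q²;q²)_N = ∏_{i=1}^{N} (1 - q^{2i})`. -/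
def qq2 (N : ℕ) : F := poch (qv ^ 2) N

/-- The finset of `ι`-tuples of naturals with total sum `N`. -/
def tuples (ι : Type) [Fintype ι] [DecidableEq ι] (N : ℕ) : Finset (ι → ℕ) :=
  (Fintype.piFinset fun _ : ι => Finset.range (N + 1)).filter fun d => ∑ x, d x = N

theorem qv_ne_zero : qv ≠ 0 := by
  unfold qv
  exact (map_ne_zero_iff _ (IsFractionRing.injective (MvPolynomial (Fin 2) ℚ) F)).2
    (MvPolynomial.X_ne_zero 0)

/-- Reversal `q ↦ q⁻¹` acts on `(q²;q²)_N` by a sign and a monomial, since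
`1 - q^{-2i} = -q^{-2i} (1 - q^{2i})` for each factor. -/
theorem map_qq2 (σ : F ≃+* F) (hσq : σ qv = qv⁻¹) (N : ℕ) :
    σ (qq2 N) = (-1) ^ N * qv ^ (-((N : ℤ) * (N + 1))) * qq2 N := by
  have hq := qv_ne_zero
  induction N with
  | zero => simp [qq2, poch]
  | succ n ih =>
    have hsucc : qq2 (n + 1) = qq2 n * (1 - qv ^ 2 * qv ^ (2 * n)) := by
      simp [qq2, poch, prod_range_succ]
    have hexp : qv ^ (-(((n + 1 : ℕ) : ℤ) * ((n + 1 : ℕ) + 1)))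
        = qv ^ (-((n : ℤ) * (n + 1))) * (qv ^ 2 * qv ^ (2 * n))⁻¹ := by
      rw [← pow_add, ← zpow_natCast qv (2 + 2 * n), ← zpow_neg, ← zpow_add₀ hq]
      congr 1
      push_cast
      ring
    rw [hsucc, map_mul, ih, hexp]
    simp only [map_sub, map_one, map_mul, map_pow, hσq, inv_pow]
    field_simp
    ring

/-- Reversal multiplies the quantum multinomial by `q^{Σ dᵢ² - j²}`: the signs and the
linear parts of the exponents cancel because `Σ dᵢ = j`. -/
theorem map_multinomial (σ : F ≃+* F) (hσq : σ qv = qv⁻¹) {m : ℕ} (d : Fin m → ℕ) (j : ℕ)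
    (hd : ∑ i, d i = j) :
    σ (qq2 j / ∏ i, qq2 (d i)) =
      qv ^ ((∑ i, (d i : ℤ) ^ 2) - (j : ℤ) ^ 2) * (qq2 j / ∏ i, qq2 (d i)) := by
  have hq := qv_ne_zero
  have hprod : ∀ s : Finset (Fin m), ∏ i ∈ s, qv ^ (-((d i : ℤ) * (d i + 1)))
      = qv ^ (∑ i ∈ s, -((d i : ℤ) * (d i + 1))) := by
    intro s
    induction s using Finset.induction_on with
    | empty => simp
    | insert i s hi ih => rw [prod_insert hi, sum_insert hi, ih, zpow_add₀ hq]
  have hdz : (∑ i, (d i : ℤ)) = j := by exact_mod_cast hd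
  have hexp : (∑ i, (d i : ℤ) ^ 2) - (j : ℤ) ^ 2
      = -((j : ℤ) * (j + 1)) - ∑ i, -((d i : ℤ) * (d i + 1)) := by
    have hsplit : ∑ i, -((d i : ℤ) * (d i + 1)) = -(∑ i, (d i : ℤ) ^ 2) - ∑ i, (d i : ℤ) := by
      rw [← sum_neg_distrib, ← sum_sub_distrib]
      exact sum_congr rfl fun i _ => by ring
    rw [hsplit, hdz]
    ring
  rw [map_div₀, map_prod, map_qq2 σ hσq j]
  simp only [map_qq2 σ hσq (d _)]
  rw [prod_mul_distrib, prod_mul_distrib, prod_pow_eq_pow_sum, hd, hprod, hexp, zpow_sub₀ hq,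
    mul_div_mul_comm, mul_div_mul_comm, div_self (pow_ne_zero _ (by simp)), one_mul]

theorem statement5 (m : ℕ) (S A : Fin m → ℤ)
    (Q : Matrix (Fin m) (Fin m) ℤ) (hQ : Q.IsSymm)
    (σ : F ≃+* F) (hσq : σ qv = qv⁻¹) (hσa : σ av = av)
    (Q' : Matrix (Fin m) (Fin m) ℤ)
    (hQ' : Q' = Matrix.of fun i j => -Q i j - 1 + (if i = j then 1 else 0))
    (j : ℕ) :
    σ (∑ d ∈ tuples (Fin m) j,
        (-qv) ^ (∑ i, S i * (d i : ℤ)) * av ^ (∑ i, A i * (d i : ℤ)) *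
          qv ^ (∑ i, ∑ i', (d i : ℤ) * Q i i' * (d i' : ℤ)) *
          (qq2 j / ∏ i, qq2 (d i))) =
      ∑ d ∈ tuples (Fin m) j,
        (-qv) ^ (-(∑ i, S i * (d i : ℤ))) * av ^ (∑ i, A i * (d i : ℤ)) *
          qv ^ (∑ i, ∑ i', (d i : ℤ) * Q' i i' * (d i' : ℤ)) *
          (qq2 j / ∏ i, qq2 (d i)) := by
  have hq := qv_ne_zero
  rw [map_sum]
  refine sum_congr rfl fun d hd => ?_
  have hdj : ∑ i, d i = j := (mem_filter.1 hd).2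
  have hdz : (∑ i, (d i : ℤ)) = j := by exact_mod_cast hdj
  -- `d·Q′·d = -d·Q·d - (Σ dᵢ)² + Σ dᵢ²`, the last two terms coming from `-J` and `I`.
  have hexp : ∑ i, ∑ i', (d i : ℤ) * Q' i i' * (d i' : ℤ)
      = -(∑ i, ∑ i', (d i : ℤ) * Q i i' * (d i' : ℤ))
        + ((∑ i, (d i : ℤ) ^ 2) - (j : ℤ) ^ 2) := by
    have hterm : ∀ i i', (d i : ℤ) * Q' i i' * (d i' : ℤ)
        = -((d i : ℤ) * Q i i' * (d i' : ℤ))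
          + ((if i = i' then (d i : ℤ) * d i' else 0) - (d i : ℤ) * d i') := by
      intro i i'
      rw [hQ', Matrix.of_apply]
      split_ifs <;> ring
    simp only [hterm, sum_add_distrib, sum_sub_distrib, sum_neg_distrib, sum_ite_eq, mem_univ,
      if_true, ← mul_sum, ← sum_mul, hdz]
    simp only [pow_two]
  rw [map_mul, map_mul, map_mul, map_multinomial σ hσq d j hdj, map_zpow₀, map_zpow₀, map_zpow₀,
    map_neg, hσq, hσa, ← inv_neg, inv_zpow', inv_zpow', hexp, zpow_add₀ hq]
  ring

end
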